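/- Let f ∈ ℂ[x,y,z,w] be a reduced homogeneous polynomial of degree d defining a surface D: f = 0 in P³ which is tame with respect to a pair of syzygies ρ1, ρ2 of degrees e1 = deg ρ1 ≤ e2 = deg ρ2. Set e3 = d − 1 − e1 − e2 and assume e3 ≥ e2. Then for every integer k ≥ e3 + d − 1 one has m(f)_k ≤ binom(k+3,3) − 4·binom(k−d+4,3) + binom(k−d−e1+4,3) + binom(k−d−e2+4,3) + binom(k−d−e3+4,3) (with binom(m,3) = 0 when m < 3). Moreover the following are equivalent: (i) equality holds for every k ≥ e3 + d − 1; (ii) equality holds for k = e3 + d − 1; (iii) D is a free surface with exponents e1, e2, e3. -/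

import Mathlib

open MvPolynomial Matrix

noncomputable section

/-- The polynomial ring `S = ℂ[x,y,z,w]`. -/
abbrev S4 : Type := MvPolynomial (Fin 4) ℂ

/-- The `S`-linear map sending `ρ = (α,β,γ,δ)` to `α fₓ + β f_y + γ f_z + δ f_w`. -/
def jacPair (f : S4) : (Fin 4 → S4) →ₗ[S4] S4 where
  toFun ρ := ∑ i, ρ i * pderiv i f
  map_add' a b := by simp [add_mul, Finset.sum_add_distrib]
  map_smul' c a := by simp [Finset.mul_sum, mul_assoc]

/-- `AR(f)`: the `S`-module of all Jacobian syzygies of `f`. -/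
def AR4 (f : S4) : Submodule S4 (Fin 4 → S4) := LinearMap.ker (jacPair f)

/-- A vector of polynomials is homogeneous of degree `q` if each component is. -/
def VecHomog (ρ : Fin 4 → S4) (q : ℕ) : Prop := ∀ i, (ρ i).IsHomogeneous q

/-- `AR(f)_k`, the degree-`k` homogeneous part of `AR(f)`, as a `ℂ`-subspace. -/
def ARgr (f : S4) (k : ℕ) : Submodule ℂ (Fin 4 → S4) :=
  (AR4 f).restrictScalars ℂ ⊓ Submodule.pi Set.univ (fun _ => homogeneousSubmodule (Fin 4) ℂ k)

/-- `ar(f)_k = dim_ℂ AR(f)_k`. -/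
def arDim (f : S4) (k : ℕ) : ℕ := Module.finrank ℂ (ARgr f k)

/-- `ar(f)_q` for an integer index, with the convention that it vanishes for `q < 0`. -/
def arZ (f : S4) (q : ℤ) : ℕ := if 0 ≤ q then arDim f q.toNat else 0

/-- The Jacobian ideal of `f`. -/
def JacIdeal (f : S4) : Ideal S4 := Ideal.span (Set.range fun i : Fin 4 => pderiv i f)

/-- `m(f)_k = dim_ℂ M(f)_k`, the dimension of the degree-`k` part of the Milnor algebra. -/
def milnor4 (f : S4) (k : ℕ) : ℕ :=
  Module.finrank ℂ ((homogeneousSubmodule (Fin 4) ℂ k).map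
    (Submodule.mkQ ((JacIdeal f).restrictScalars ℂ)))

/-- `binom(m,3)` with the convention that it is `0` for `m < 3`. -/
def binom3 (m : ℤ) : ℕ := m.toNat.choose 3

/-- All four `3×3` minors of the `3×4` matrix with rows `ρ1, ρ2, ρ` vanish. -/
def MinorsVanish3 (ρ1 ρ2 ρ : Fin 4 → S4) : Prop :=
  ∀ j : Fin 4,
    (Matrix.of fun i k => ![ρ1, ρ2, ρ] i (j.succAbove k) : Matrix (Fin 3) (Fin 3) S4).det = 0

/-- `D : f = 0` is tame with respect to `ρ1, ρ2`: every homogeneous syzygy `ρ` for which all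
`3×3` minors of the matrix with rows `ρ1, ρ2, ρ` vanish lies in `S·ρ1 + S·ρ2`. -/
def TamePair (f : S4) (ρ1 ρ2 : Fin 4 → S4) : Prop :=
  ∀ ρ ∈ AR4 f, ∀ q : ℕ, VecHomog ρ q → MinorsVanish3 ρ1 ρ2 ρ →
    ∃ a b : S4, ρ = a • ρ1 + b • ρ2

/-- `ρ1` is a nonzero homogeneous syzygy of minimal degree `e1`, and `ρ2` is a homogeneous
syzygy of minimal degree `e2 ≥ e1` among the homogeneous syzygies not in `S·ρ1`. -/
def MinimalPair (f : S4) (ρ1 ρ2 : Fin 4 → S4) (e1 e2 : ℕ) : Prop :=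
  ρ1 ∈ AR4 f ∧ ρ1 ≠ 0 ∧ VecHomog ρ1 e1 ∧
  (∀ ρ ∈ AR4 f, ∀ q : ℕ, ρ ≠ 0 → VecHomog ρ q → e1 ≤ q) ∧
  ρ2 ∈ AR4 f ∧ VecHomog ρ2 e2 ∧ e1 ≤ e2 ∧ (∀ a : S4, ρ2 ≠ a • ρ1) ∧
  (∀ ρ ∈ AR4 f, ∀ q : ℕ, VecHomog ρ q → (∀ a : S4, ρ ≠ a • ρ1) → e2 ≤ q)

/-- `D : f = 0` is a free surface with exponents `d1 ≤ d2 ≤ d3`: `AR(f)` is a free graded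
`S`-module with a homogeneous basis of degrees `d1, d2, d3`. -/
def IsFreeWith (f : S4) (d1 d2 d3 : ℕ) : Prop :=
  d1 ≤ d2 ∧ d2 ≤ d3 ∧
  ∃ ρ1 ρ2 ρ3 : Fin 4 → S4,
    ρ1 ∈ AR4 f ∧ ρ2 ∈ AR4 f ∧ ρ3 ∈ AR4 f ∧
    VecHomog ρ1 d1 ∧ VecHomog ρ2 d2 ∧ VecHomog ρ3 d3 ∧
    (∀ ρ ∈ AR4 f, ∃ a b c : S4, ρ = a • ρ1 + b • ρ2 + c • ρ3) ∧
    (∀ a b c : S4, a • ρ1 + b • ρ2 + c • ρ3 = 0 → a = 0 ∧ b = 0 ∧ c = 0)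

/-- `D : f = 0` is a nearly free surface with exponents `d1 ≤ d2 ≤ d3` (`d4 = d3`):
`AR(f)` is generated by four homogeneous syzygies of degrees `d1, d2, d3, d3`,
with `d3 = d - (d1 + d2)`, whose module of relations is generated by a single relation
`a₁ρ₁ + a₂ρ₂ + a₃ρ₃ + a₄ρ₄ = 0` with `a₁, a₂, a₃, a₄` homogeneous of degrees
`d3-d1+1, d3-d2+1, 1, 1`. -/
def IsNearlyFreeWith (f : S4) (d d1 d2 d3 : ℕ) : Prop :=
  d1 ≤ d2 ∧ d2 ≤ d3 ∧ d1 + d2 + d3 = d ∧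
  ∃ (ρ : Fin 4 → Fin 4 → S4) (a : Fin 4 → S4),
    (∀ i, ρ i ∈ AR4 f) ∧
    VecHomog (ρ 0) d1 ∧ VecHomog (ρ 1) d2 ∧ VecHomog (ρ 2) d3 ∧ VecHomog (ρ 3) d3 ∧
    (∀ σ ∈ AR4 f, ∃ b : Fin 4 → S4, σ = ∑ i, b i • ρ i) ∧
    (a 0).IsHomogeneous (d3 - d1 + 1) ∧ (a 1).IsHomogeneous (d3 - d2 + 1) ∧
    (a 2).IsHomogeneous 1 ∧ (a 3).IsHomogeneous 1 ∧
    a ≠ 0 ∧ (∑ i, a i • ρ i) = 0 ∧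
    (∀ b : Fin 4 → S4, (∑ i, b i • ρ i) = 0 → ∃ c : S4, b = c • a)

/-- `D : f = 0` is tame: it is tame with respect to some pair `ρ1, ρ2` chosen as in the paper. -/
def IsTame (f : S4) : Prop :=
  ∃ (ρ1 ρ2 : Fin 4 → S4) (e1 e2 : ℕ), MinimalPair f ρ1 ρ2 e1 e2 ∧ TamePair f ρ1 ρ2

/-- The `4×4` matrix with rows the Euler vector field `(x,y,z,w)` and `ρ1, ρ2, ρ`. -/
def EMat (ρ1 ρ2 ρ : Fin 4 → S4) : Matrix (Fin 4) (Fin 4) S4 :=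
  Matrix.of ![fun i => X i, ρ1, ρ2, ρ]

/-- The upper bound for `m(f)_k` in Theorem 1.3 (2). -/
def milnorBound3 (d e1 e2 e3 : ℕ) (k : ℕ) : ℤ :=
  (binom3 ((k : ℤ) + 3) : ℤ) - 4 * binom3 ((k : ℤ) - d + 4) +
    ((binom3 ((k : ℤ) - d - e1 + 4) : ℤ) + (binom3 ((k : ℤ) - d - e2 + 4) : ℤ) +
      (binom3 ((k : ℤ) - d - e3 + 4) : ℤ))

/-!
Let `ρ₁, …, ρₘ` be the given syzygies of `f` in `m + 2` variables and `X` the Euler field. For any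
syzygy `τ`, Cramer's rule gives `det (X, ρ, τ) · ∂f/∂xᵢ ∈ (f)`, so the squarefree `f` divides
`det (X, ρ, τ)`. By tameness the syzygies with vanishing determinant are exactly the combinations of
the `ρᵢ`, which are independent. Rank–nullity for `τ ↦ det (X, ρ, τ) / f`, a map of degree
`-eₘ₊₁`, bounds the Hilbert function of the module of syzygies by that of a free module with
generators in degrees `e₁, …, eₘ₊₁`, where `deg f = 1 + ∑ eᵢ`. Equality in degree `eₘ₊₁` provides
`τ` with `det (X, ρ, τ) = f`, and then `ρ₁, …, ρₘ, τ` is a basis by Saito's criterion. Rank–nullity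
for the map `τ ↦ ∑ τᵢ ∂f/∂xᵢ` translates this into statements about the Milnor algebra.
-/

section LinearAlgebra

variable {K V W : Type*} [DivisionRing K] [AddCommGroup V] [Module K V] [AddCommGroup W]
  [Module K W]

lemma finrank_map_add_finrank_inf_ker (φ : V →ₗ[K] W) (P : Submodule K V)
    [FiniteDimensional K P] :
    Module.finrank K (P.map φ) + Module.finrank K ↥(P ⊓ LinearMap.ker φ) = Module.finrank K P := by
  rw [← LinearMap.range_domRestrict, ← Submodule.map_comap_subtype,
    ← LinearMap.ker_domRestrict, Submodule.finrank_map_subtype_eq]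
  exact (φ.domRestrict P).finrank_range_add_finrank_ker

lemma finrank_map_of_injective {φ : V →ₗ[K] W} (hφ : Function.Injective φ) (P : Submodule K V) :
    Module.finrank K (P.map φ) = Module.finrank K P :=
  (P.equivMapOfInjective φ hφ).finrank_eq.symm

variable {ι : Type*} (P : ι → Submodule K V)

/-- The product of submodules `P i`, as a submodule of the functions on `ι`, is the module of
dependent functions with values in `P i`. -/
def piUnivEquiv : Submodule.pi Set.univ P ≃ₗ[K] (∀ i, P i) where
  toFun v i := ⟨v.1 i, v.2 i trivial⟩
  invFun v := ⟨fun i => v i, fun i _ => (v i).2⟩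
  map_add' _ _ := rfl
  map_smul' _ _ := rfl

instance finiteDimensional_pi_univ [Finite ι] [∀ i, FiniteDimensional K (P i)] :
    FiniteDimensional K (Submodule.pi Set.univ P) :=
  (piUnivEquiv P).symm.finiteDimensional

lemma finrank_pi_univ [Fintype ι] [∀ i, FiniteDimensional K (P i)] :
    Module.finrank K (Submodule.pi Set.univ P) = ∑ i, Module.finrank K (P i) :=
  (piUnivEquiv P).finrank_eq.trans (Module.finrank_pi_fintype K)

end LinearAlgebra

section Forms

/-- The homogeneous polynomials of degree `j`. The degree is an integer, so that there are none
besides `0` when `j < 0`. -/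
abbrev forms (σ R : Type*) [CommSemiring R] (j : ℤ) : Submodule R (MvPolynomial σ R) :=
  weightedHomogeneousSubmodule R (1 : σ → ℤ) j

/-- The degree `j` homogeneous component of a polynomial. -/
abbrev formComponent (σ R : Type*) [CommSemiring R] (j : ℤ) :
    MvPolynomial σ R →ₗ[R] MvPolynomial σ R :=
  weightedHomogeneousComponent (1 : σ → ℤ) j

/-- The families of homogeneous polynomials of degree `j`, that is, the degree `j` part of the
graded free module `ι → MvPolynomial σ R`. -/
abbrev formVectors (ι σ R : Type*) [CommSemiring R] (j : ℤ) :
    Submodule R (ι → MvPolynomial σ R) :=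
  Submodule.pi Set.univ fun _ => forms σ R j

variable {ι σ R : Type*} [CommRing R]

lemma weight_one_eq_degree (m : σ →₀ ℕ) : Finsupp.weight (1 : σ → ℤ) m = m.degree := by
  simp [Finsupp.weight_apply, Finsupp.sum, Finsupp.degree_apply]

lemma mem_forms_natCast {p : MvPolynomial σ R} {n : ℕ} :
    p ∈ forms σ R n ↔ p.IsHomogeneous n := by
  simp only [mem_weightedHomogeneousSubmodule, IsWeightedHomogeneous, IsHomogeneous,
    weight_one_eq_degree, Nat.cast_inj, Finsupp.degree_eq_weight_one]
  rfl

lemma forms_natCast (n : ℕ) : forms σ R n = homogeneousSubmodule σ R n :=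
  Submodule.ext fun _ => mem_forms_natCast

lemma forms_of_neg {j : ℤ} (hj : j < 0) : forms σ R j = ⊥ := by
  refine (Submodule.eq_bot_iff _).2 fun p hp => ?_
  ext m
  by_contra hm
  have := weight_one_eq_degree m ▸ hp hm
  omega

lemma formComponent_mul {p : MvPolynomial σ R} {e : ℤ} (hp : p ∈ forms σ R e)
    (a : MvPolynomial σ R) (j : ℤ) :
    formComponent σ R j (a * p) = formComponent σ R (j - e) a * p := by
  let _ := weightedGradedAlgebra R (1 : σ → ℤ)
  have h := DirectSum.coe_decompose_mul_add_of_right_mem (forms σ R) (i := j - e) (a := a) hp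
  rw [sub_add_cancel] at h
  rw [← weightedDecomposition.decompose'_apply, ← weightedDecomposition.decompose'_apply]
  exact h

lemma mul_mem_forms {a b : MvPolynomial σ R} {i j : ℤ} (ha : a ∈ forms σ R i)
    (hb : b ∈ forms σ R j) : a * b ∈ forms σ R (i + j) :=
  IsWeightedHomogeneous.mul ha hb

lemma formComponent_compLeft_mem (v : ι → MvPolynomial σ R) (j : ℤ) :
    (formComponent σ R j).compLeft ι v ∈ formVectors ι σ R j :=
  fun _ _ => weightedHomogeneousComponent_mem _ _ _

lemma formComponent_compLeft_eq_self {v : ι → MvPolynomial σ R} {j : ℤ}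
    (hv : v ∈ formVectors ι σ R j) : (formComponent σ R j).compLeft ι v = v :=
  funext fun i => weightedHomogeneousComponent_eq_self (hv i trivial)

lemma single_mem_formVectors [DecidableEq ι] {p : MvPolynomial σ R} {j : ℤ}
    (hp : p ∈ forms σ R j) (i : ι) : Pi.single i p ∈ formVectors ι σ R j := by
  intro l _
  rcases eq_or_ne l i with rfl | hl
  · rwa [Pi.single_eq_same]
  · rw [Pi.single_eq_of_ne hl]
    exact Submodule.zero_mem _

lemma mem_of_forall_formComponent_mem [Finite ι]
    {N : Submodule (MvPolynomial σ R) (ι → MvPolynomial σ R)} {v : ι → MvPolynomial σ R}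
    (h : ∀ j, (formComponent σ R j).compLeft ι v ∈ N) : v ∈ N := by
  have hfin : (⋃ i, Function.support fun j => formComponent σ R j (v i)).Finite :=
    Set.finite_iUnion fun i => weightedHomogeneousComponent_finsupp (v i)
  have hv : v = ∑ j ∈ hfin.toFinset, (formComponent σ R j).compLeft ι v := by
    funext i
    rw [Finset.sum_apply]
    conv_lhs => rw [← sum_weightedHomogeneousComponent (1 : σ → ℤ) (v i)]
    refine finsum_eq_sum_of_support_subset _ ?_
    rw [hfin.coe_toFinset]
    exact Set.subset_iUnion (fun i => Function.support fun j => formComponent σ R j (v i)) i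
  rw [hv]
  exact N.sum_mem fun j _ => h j

lemma det_mem_forms [Fintype ι] [DecidableEq ι] {A : Matrix ι ι (MvPolynomial σ R)} {e : ι → ℤ}
    (hA : ∀ i, A i ∈ formVectors ι σ R (e i)) : A.det ∈ forms σ R (∑ i, e i) := by
  rw [← Matrix.det_transpose, Matrix.det_apply]
  refine Submodule.sum_mem _ fun π _ => Submodule.smul_of_tower_mem _ _ ?_
  exact IsWeightedHomogeneous.prod _ _ _ fun i _ => hA i _ trivial

/-- The degree `j` part of a submodule of the graded free module `ι → MvPolynomial σ R`. -/
def gradedPart (N : Submodule (MvPolynomial σ R) (ι → MvPolynomial σ R)) (j : ℤ) :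
    Submodule R (ι → MvPolynomial σ R) :=
  formVectors ι σ R j ⊓ N.restrictScalars R

section LinearForm

variable [Finite ι] [DecidableEq ι] {s : ℤ}
  {φ : (ι → MvPolynomial σ R) →ₗ[MvPolynomial σ R] MvPolynomial σ R}
  (hφ : ∀ i, φ (Pi.single i 1) ∈ forms σ R s)
include hφ

lemma formComponent_apply (v : ι → MvPolynomial σ R) (j : ℤ) :
    formComponent σ R j (φ v) = φ ((formComponent σ R (j - s)).compLeft ι v) := by
  cases nonempty_fintype ι
  simp only [φ.pi_apply_eq_sum_univ v, φ.pi_apply_eq_sum_univ (LinearMap.compLeft _ _ _),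
    smul_eq_mul, map_sum]
  refine Finset.sum_congr rfl fun i _ => ?_
  rw [formComponent_mul]
  · rfl
  · convert hφ i
    simp [Pi.single_apply, eq_comm]

lemma map_formVectors (j : ℤ) :
    (formVectors ι σ R (j - s)).map (φ.restrictScalars R) =
      forms σ R j ⊓ (LinearMap.range φ).restrictScalars R := by
  ext p
  constructor
  · rintro ⟨v, hv, rfl⟩
    refine ⟨?_, v, rfl⟩
    rw [← formComponent_compLeft_eq_self hv, LinearMap.coe_restrictScalars,
      ← formComponent_apply hφ]
    exact weightedHomogeneousComponent_mem _ _ _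
  · rintro ⟨hp, v, rfl⟩
    refine ⟨_, formComponent_compLeft_mem v _, ?_⟩
    rw [LinearMap.coe_restrictScalars, ← formComponent_apply hφ]
    exact weightedHomogeneousComponent_eq_self hp

end LinearForm

lemma fintype_linearCombination_mem_forms [Fintype ι] [DecidableEq ι] {g : ι → MvPolynomial σ R}
    {s : ℤ} (hg : ∀ i, g i ∈ forms σ R s) (i : ι) :
    Fintype.linearCombination (MvPolynomial σ R) g (Pi.single i 1) ∈ forms σ R s := by
  rw [Fintype.linearCombination_apply_single, one_smul]
  exact hg i

lemma gradedPart_range_linearCombination {κ : Type*} [Fintype κ] {ρ : κ → ι → MvPolynomial σ R}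
    {e : κ → ℤ} (hρ : ∀ i, ρ i ∈ formVectors ι σ R (e i)) (j : ℤ) :
    gradedPart (LinearMap.range (Fintype.linearCombination (MvPolynomial σ R) ρ)) j =
      (Submodule.pi Set.univ fun i => forms σ R (j - e i)).map
        ((Fintype.linearCombination (MvPolynomial σ R) ρ).restrictScalars R) := by
  refine le_antisymm ?_ ?_
  · rintro _ ⟨hv, a, rfl⟩
    refine ⟨fun i => formComponent σ R (j - e i) (a i),
      fun i _ => weightedHomogeneousComponent_mem _ _ _, ?_⟩
    conv_rhs => rw [← formComponent_compLeft_eq_self hv]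
    simp only [LinearMap.coe_restrictScalars, Fintype.linearCombination_apply, map_sum]
    refine Finset.sum_congr rfl fun i _ => funext fun l => ?_
    exact (formComponent_mul (hρ i l trivial) _ _).symm
  · rintro _ ⟨a, ha, rfl⟩
    refine ⟨fun l _ => ?_, a, rfl⟩
    simp only [LinearMap.coe_restrictScalars, Fintype.linearCombination_apply, Finset.sum_apply]
    refine Submodule.sum_mem _ fun i _ => ?_
    simpa only [sub_add_cancel, Pi.smul_apply, smul_eq_mul] using
      mul_mem_forms (ha i trivial) (hρ i l trivial)

end Forms

section HilbertFunction

variable {ι σ K : Type*} [Field K]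

instance finiteDimensional_forms [Finite σ] (j : ℤ) : FiniteDimensional K (forms σ K j) := by
  rcases lt_or_ge j 0 with hj | hj
  · rw [forms_of_neg hj]
    infer_instance
  · lift j to ℕ using hj
    rw [forms_natCast]
    exact Module.Finite.iff_fg.2 (homogeneousSubmodule_fg σ K j)

instance finiteDimensional_gradedPart [Finite ι] [Finite σ]
    (N : Submodule (MvPolynomial σ K) (ι → MvPolynomial σ K)) (j : ℤ) :
    FiniteDimensional K (gradedPart N j) :=
  Submodule.finiteDimensional_inf_left _ _

/-- The dimension of the space of degree `j` forms on `ℙⁿ⁺¹`, as a binomial coefficient. The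
truncation of `j + n + 1` at `0` is harmless: the coefficient vanishes for all `j < 0`. -/
def formsDim (n : ℕ) (j : ℤ) : ℕ := (j + (n + 1)).toNat.choose (n + 1)

lemma finrank_homogeneousSubmodule (n k : ℕ) :
    Module.finrank K (homogeneousSubmodule (Fin (n + 1)) K k) = (k + n).choose n := by
  have h : {m : Fin (n + 1) →₀ ℕ | m.degree = k} =
      (Finset.univ.finsuppAntidiag k : Finset (Fin (n + 1) →₀ ℕ)) := by
    ext m
    simp [Finset.mem_finsuppAntidiag, Finsupp.degree_eq_sum]
  rw [homogeneousSubmodule_eq_finsupp_supported,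
    (AddMonoidAlgebra.supportedEquivFinsupp _).finrank_eq, h, Module.finrank_finsupp_self]
  simp only [Finset.coe_sort_coe, Fintype.card_coe, Finset.card_finsuppAntidiag_nat_eq_choose,
    Finset.card_univ, Fintype.card_fin]
  rw [add_right_comm, Nat.add_sub_cancel, add_comm n, Nat.choose_symm_add]

lemma finrank_forms (n : ℕ) (j : ℤ) :
    Module.finrank K (forms (Fin (n + 2)) K j) = formsDim n j := by
  rcases lt_or_ge j 0 with hj | hj
  · rw [forms_of_neg hj, finrank_bot, formsDim, Nat.choose_eq_zero_of_lt]
    omega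
  · lift j to ℕ using hj
    rw [forms_natCast, finrank_homogeneousSubmodule, formsDim]
    norm_cast

lemma finrank_gradedPart_span [Finite σ] {κ : Type*} [Fintype κ]
    {ρ : κ → ι → MvPolynomial σ K} {e : κ → ℤ} (hρ : ∀ i, ρ i ∈ formVectors ι σ K (e i))
    (hli : LinearIndependent (MvPolynomial σ K) ρ) (j : ℤ) :
    Module.finrank K (gradedPart (Submodule.span (MvPolynomial σ K) (Set.range ρ)) j) =
      ∑ i, Module.finrank K (forms σ K (j - e i)) := by
  rw [← Fintype.range_linearCombination, gradedPart_range_linearCombination hρ,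
    finrank_map_of_injective, finrank_pi_univ]
  exact linearIndependent_iff_injective_fintypeLinearCombination.1 hli

lemma finrank_forms_quotient [Finite σ] [Fintype ι] {g : ι → MvPolynomial σ K} {s : ℤ}
    (hg : ∀ i, g i ∈ forms σ K s) (j : ℤ) :
    Module.finrank K ((forms σ K j).map
        ((Ideal.span (Set.range g)).restrictScalars K).mkQ) +
      Fintype.card ι * Module.finrank K (forms σ K (j - s)) =
    Module.finrank K (forms σ K j) + Module.finrank K
      (gradedPart (LinearMap.ker (Fintype.linearCombination (MvPolynomial σ K) g)) (j - s)) := by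
  classical
  set φ := Fintype.linearCombination (MvPolynomial σ K) g
  have hquot := finrank_map_add_finrank_inf_ker
    ((Ideal.span (Set.range g)).restrictScalars K).mkQ (forms σ K j)
  have hrel := finrank_map_add_finrank_inf_ker (φ.restrictScalars K) (formVectors ι σ K (j - s))
  rw [map_formVectors (fintype_linearCombination_mem_forms hg), Fintype.range_linearCombination,
    finrank_pi_univ, Finset.sum_const, Finset.card_univ, smul_eq_mul,
    LinearMap.ker_restrictScalars] at hrel
  rw [Submodule.ker_mkQ] at hquot
  rw [← hquot, ← hrel]
  unfold gradedPart Ideal.span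
  ring

end HilbertFunction

section Squarefree

variable {σ R : Type*}

lemma totalDegree_pderiv_lt [CommSemiring R] {p : MvPolynomial σ R} {i : σ}
    (h : pderiv i p ≠ 0) : (pderiv i p).totalDegree < p.totalDegree := by
  obtain ⟨m, hm, hdeg⟩ := (pderiv i p).support.exists_mem_eq_sup
    (Finset.nonempty_iff_ne_empty.2 (support_eq_empty.not.2 h)) fun s => s.degree
  have hm' : m + Finsupp.single i 1 ∈ p.support := by
    rw [mem_support_iff, coeff_pderiv] at hm
    exact mem_support_iff.2 (left_ne_zero_of_mul hm)
  calc (pderiv i p).totalDegree = m.degree := hdeg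
    _ < (m + Finsupp.single i 1).degree := by simp
    _ ≤ p.totalDegree := le_totalDegree hm'

lemma pderiv_eq_zero_of_dvd_pderiv [CommRing R] [IsDomain R] {p : MvPolynomial σ R} {i : σ}
    (h : p ∣ pderiv i p) : pderiv i p = 0 := by
  by_contra hne
  exact (totalDegree_pderiv_lt hne).not_ge (totalDegree_le_of_dvd_of_isDomain h hne)

lemma eq_C_of_forall_pderiv_eq_zero [CommSemiring R] [NoZeroDivisors R] [CharZero R]
    {p : MvPolynomial σ R} (h : ∀ i, pderiv i p = 0) : p = C (coeff 0 p) := by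
  classical
  ext m
  rw [coeff_C]
  split_ifs with hm
  · rw [hm]
  · obtain ⟨i, hi⟩ := Finsupp.ne_iff.1 (Ne.symm hm)
    have hi1 : Finsupp.single i 1 ≤ m := Finsupp.single_le_iff.2 (Nat.one_le_iff_ne_zero.2 hi)
    have hcoeff := coeff_pderiv (i := i) p (m - Finsupp.single i 1)
    rw [h i, tsub_add_cancel_of_le hi1, coeff_zero] at hcoeff
    exact (mul_eq_zero.1 hcoeff.symm).resolve_right (Nat.cast_add_one_ne_zero _)

/- Where `f = c u` and `p = c v` with `u`, `v` coprime, the factor `u` divides all its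
own derivatives and is therefore constant. -/
lemma dvd_of_squarefree_of_forall_dvd_mul_pderiv {K : Type*} [Field K] [CharZero K]
    {f p : MvPolynomial σ K} (hf : Squarefree f) (h : ∀ i, f ∣ p * pderiv i f) : f ∣ p := by
  obtain ⟨u, v, c, huv, rfl, rfl⟩ :=
    UniqueFactorizationMonoid.exists_reduced_factors f hf.ne_zero p
  have huc : IsRelPrime u c := (squarefree_mul_iff.1 hf).1.symm
  have hc : c ≠ 0 := left_ne_zero_of_mul hf.ne_zero
  have hu : u ≠ 0 := right_ne_zero_of_mul hf.ne_zero
  have hpderiv (i : σ) : pderiv i u = 0 := by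
    refine pderiv_eq_zero_of_dvd_pderiv (huc.dvd_of_dvd_mul_left ?_)
    have hi := h i
    rw [mul_assoc, mul_dvd_mul_iff_left hc] at hi
    have hi' := huv.dvd_of_dvd_mul_left hi
    rw [pderiv_mul] at hi'
    exact (dvd_add_right (dvd_mul_left _ _)).1 hi'
  rw [eq_C_of_forall_pderiv_eq_zero hpderiv] at hu ⊢
  have hunit : IsUnit (C (coeff 0 u) : MvPolynomial σ K) :=
    (isUnit_iff_ne_zero.2 (C_ne_zero.1 hu)).map C
  exact mul_dvd_mul_left c hunit.dvd

end Squarefree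

section Syzygies

variable {K : Type*} [Field K]

/-- The polynomial vector fields on affine `n`-space, as the families of their coefficients. -/
abbrev PolyVectorField (n : ℕ) (K : Type*) [Field K] : Type _ := Fin n → MvPolynomial (Fin n) K

/-- The module of Jacobian syzygies of `f`, the relations between its partial derivatives. -/
def jacobianSyzygies {n : ℕ} (f : MvPolynomial (Fin n) K) :
    Submodule (MvPolynomial (Fin n) K) (PolyVectorField n K) :=
  LinearMap.ker (Fintype.linearCombination (MvPolynomial (Fin n) K) fun i => pderiv i f)

lemma pderiv_mem_forms {n d : ℕ} {f : MvPolynomial (Fin n) K} (hf : f.IsHomogeneous (d + 1))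
    (i : Fin n) : pderiv i f ∈ forms (Fin n) K d :=
  mem_forms_natCast.2 hf.pderiv

lemma formComponent_mem_jacobianSyzygies {n d : ℕ} {f : MvPolynomial (Fin n) K}
    (hf : f.IsHomogeneous (d + 1)) {τ : PolyVectorField n K} (hτ : τ ∈ jacobianSyzygies f)
    (j : ℤ) : (formComponent (Fin n) K j).compLeft (Fin n) τ ∈ jacobianSyzygies f := by
  have h := formComponent_apply (fintype_linearCombination_mem_forms (pderiv_mem_forms hf)) τ
    (j + d)
  rw [LinearMap.mem_ker.1 hτ, map_zero, add_sub_cancel_right] at h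
  exact h.symm

variable {m : ℕ}

/-- The square matrix whose rows are the Euler field `(x₀, …, xₘ)` and the vector fields `ρ i`. -/
def eulerMatrix (ρ : Fin m → PolyVectorField (m + 1) K) :
    Matrix (Fin (m + 1)) (Fin (m + 1)) (MvPolynomial (Fin (m + 1)) K) :=
  Matrix.of (Fin.cons X ρ)

variable {f : MvPolynomial (Fin (m + 1)) K} {ρ : Fin m → PolyVectorField (m + 1) K}

lemma det_eulerMatrix_mem_forms {e : Fin m → ℤ}
    (hρ : ∀ i, ρ i ∈ formVectors (Fin (m + 1)) (Fin (m + 1)) K (e i)) :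
    (eulerMatrix ρ).det ∈ forms (Fin (m + 1)) K (1 + ∑ i, e i) := by
  have h (i : Fin (m + 1)) : eulerMatrix ρ i ∈
      formVectors (Fin (m + 1)) (Fin (m + 1)) K ((Fin.cons 1 e : Fin (m + 1) → ℤ) i) := by
    cases i using Fin.cases with
    | zero => exact fun i _ => isWeightedHomogeneous_X K _ i
    | succ i => exact hρ i
  simpa only [Fin.sum_cons] using det_mem_forms h

lemma eulerMatrix_mulVec_pderiv {d : ℕ} (hf : f.IsHomogeneous d)
    (hρ : ∀ i, ρ i ∈ jacobianSyzygies f) :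
    eulerMatrix ρ *ᵥ (fun i => pderiv i f) = Pi.single 0 (d • f) := by
  funext i
  cases i using Fin.cases with
  | zero =>
    rw [Pi.single_eq_same]
    exact hf.sum_X_mul_pderiv
  | succ i =>
    rw [Pi.single_eq_of_ne i.succ_ne_zero]
    exact hρ i

/- By Cramer's rule, `f` divides the product of the determinant with each `∂f/∂xᵢ`. -/
lemma dvd_det_eulerMatrix [CharZero K] {d : ℕ} (hf : f.IsHomogeneous d) (hsq : Squarefree f)
    (hρ : ∀ i, ρ i ∈ jacobianSyzygies f) : f ∣ (eulerMatrix ρ).det := by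
  refine dvd_of_squarefree_of_forall_dvd_mul_pderiv hsq fun i => ?_
  have hcramer := congrFun (congrArg ((eulerMatrix ρ).adjugate *ᵥ ·)
    (eulerMatrix_mulVec_pderiv hf hρ)) i
  simp only [Matrix.mulVec_mulVec, Matrix.adjugate_mul, Matrix.smul_mulVec, Matrix.one_mulVec,
    Pi.smul_apply, smul_eq_mul, Matrix.mulVec_single, op_smul_eq_mul, Matrix.col_apply] at hcramer
  rw [hcramer]
  exact dvd_mul_of_dvd_right (dvd_smul_of_dvd d dvd_rfl) _

lemma not_linearIndependent_of_det_eulerMatrix_eq_zero [CharZero K] {d : ℕ} (hd : d ≠ 0)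
    (hf : f.IsHomogeneous d) (hf0 : f ≠ 0) (hρ : ∀ i, ρ i ∈ jacobianSyzygies f)
    (hdet : (eulerMatrix ρ).det = 0) : ¬LinearIndependent (MvPolynomial (Fin (m + 1)) K) ρ := by
  obtain ⟨v, hv, hvA⟩ := Matrix.exists_vecMul_eq_zero_iff.2 hdet
  have hv0 : v 0 = 0 := by
    have h := Matrix.dotProduct_mulVec v (eulerMatrix ρ) fun i => pderiv i f
    rw [hvA, eulerMatrix_mulVec_pderiv hf hρ, dotProduct_single, zero_dotProduct] at h
    exact (mul_eq_zero.1 h).resolve_right (smul_ne_zero hd hf0)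
  have hrel : ∑ i, v i.succ • ρ i = 0 := by
    rw [Matrix.vecMul_eq_sum, Fin.sum_univ_succ, hv0, zero_smul, zero_add] at hvA
    exact hvA
  intro hli
  exact hv (funext (Fin.cases hv0 (Fintype.linearIndependent_iff.1 hli _ hrel)))

/-- The determinant of `eulerMatrix` as a linear function of its last row, the other rows being
the Euler field and the vector fields `ρ i`. -/
def eulerDet (ρ : Fin m → PolyVectorField (m + 2) K) :
    PolyVectorField (m + 2) K →ₗ[MvPolynomial (Fin (m + 2)) K] MvPolynomial (Fin (m + 2)) K :=
  Matrix.detRowAlternating.toMultilinearMap.toLinearMap (Fin.cons X (Fin.snoc ρ 0))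
    (Fin.last (m + 1))

lemma eulerDet_apply (ρ : Fin m → PolyVectorField (m + 2) K) (τ : PolyVectorField (m + 2) K) :
    eulerDet ρ τ = (eulerMatrix (Fin.snoc ρ τ)).det := by
  rw [eulerDet, MultilinearMap.toLinearMap_apply, ← Fin.succ_last, ← Fin.cons_update,
    Fin.update_snoc_last]
  rfl

lemma eulerDet_apply_self (ρ : Fin m → PolyVectorField (m + 2) K) (i : Fin m) :
    eulerDet ρ (ρ i) = 0 := by
  have hne : i.castSucc.succ ≠ (Fin.last m).succ :=
    (Fin.succ_injective _).ne (Fin.castSucc_lt_last i).ne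
  rw [eulerDet_apply]
  refine Matrix.det_zero_of_row_eq hne (funext fun l => ?_)
  simp [eulerMatrix]

lemma eulerDet_mem_forms {ρ : Fin m → PolyVectorField (m + 2) K} {τ : PolyVectorField (m + 2) K}
    {e : Fin m → ℤ} {j : ℤ} (hρ : ∀ i, ρ i ∈ formVectors (Fin (m + 2)) (Fin (m + 2)) K (e i))
    (hτ : τ ∈ formVectors (Fin (m + 2)) (Fin (m + 2)) K j) :
    eulerDet ρ τ ∈ forms (Fin (m + 2)) K (1 + (∑ i, e i + j)) := by
  have h (i : Fin (m + 1)) : Fin.snoc (α := fun _ => PolyVectorField (m + 2) K) ρ τ i ∈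
      formVectors (Fin (m + 2)) (Fin (m + 2)) K ((Fin.snoc e j : Fin (m + 1) → ℤ) i) := by
    cases i using Fin.lastCases with
    | last => simpa only [Fin.snoc_last] using hτ
    | cast i => simpa only [Fin.snoc_castSucc] using hρ i
  rw [eulerDet_apply]
  simpa only [Fin.sum_snoc] using det_eulerMatrix_mem_forms h

end Syzygies

section Tame

lemma snoc_mem {S α : Type*} [SetLike S α] {s : S} {n : ℕ} {v : Fin n → α} {a : α}
    (hv : ∀ i, v i ∈ s) (ha : a ∈ s) (i : Fin (n + 1)) :
    Fin.snoc (α := fun _ => α) v a i ∈ s := by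
  cases i using Fin.lastCases with
  | last => rwa [Fin.snoc_last]
  | cast i => simpa only [Fin.snoc_castSucc] using hv i

variable {m : ℕ} {K : Type*} [Field K] {f : MvPolynomial (Fin (m + 2)) K}
  {ρ : Fin m → PolyVectorField (m + 2) K}

/-- The hypersurface `f = 0` is tame with respect to `ρ` if the homogeneous syzygies that depend
linearly on `ρ` are combinations of `ρ`. Linear dependence of `m + 1` vectors over the domain
`K[x₀, …, xₘ₊₁]` means that the maximal minors of the matrix they form vanish. -/
def TameFamily (f : MvPolynomial (Fin (m + 2)) K) (ρ : Fin m → PolyVectorField (m + 2) K) : Prop :=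
  ∀ τ ∈ jacobianSyzygies f, ∀ j : ℤ, τ ∈ formVectors (Fin (m + 2)) (Fin (m + 2)) K j →
    ¬LinearIndependent (MvPolynomial (Fin (m + 2)) K) (Fin.snoc ρ τ : Fin (m + 1) → _) →
    τ ∈ Submodule.span (MvPolynomial (Fin (m + 2)) K) (Set.range ρ)

/-- The syzygies `∂f/∂xⱼ · eᵢ - ∂f/∂xᵢ · eⱼ` for fixed `j` and all `i ≠ j`. -/
def koszulSyzygies (f : MvPolynomial (Fin (m + 2)) K) (j : Fin (m + 2)) (l : Fin (m + 1)) :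
    PolyVectorField (m + 2) K :=
  Pi.single (j.succAbove l) (pderiv j f) - Pi.single j (pderiv (j.succAbove l) f)

lemma koszulSyzygies_mem (f : MvPolynomial (Fin (m + 2)) K) (j : Fin (m + 2)) (l : Fin (m + 1)) :
    koszulSyzygies f j l ∈ jacobianSyzygies f := by
  rw [jacobianSyzygies, LinearMap.mem_ker, koszulSyzygies, map_sub,
    Fintype.linearCombination_apply_single, Fintype.linearCombination_apply_single, smul_eq_mul,
    smul_eq_mul, mul_comm, sub_self]

lemma koszulSyzygies_mem_formVectors {d : ℕ} (hf : f.IsHomogeneous (d + 1)) (j : Fin (m + 2))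
    (l : Fin (m + 1)) :
    koszulSyzygies f j l ∈ formVectors (Fin (m + 2)) (Fin (m + 2)) K d :=
  Submodule.sub_mem _ (single_mem_formVectors (pderiv_mem_forms hf j) _)
    (single_mem_formVectors (pderiv_mem_forms hf _) _)

lemma linearIndependent_koszulSyzygies {j : Fin (m + 2)} (hj : pderiv j f ≠ 0) :
    LinearIndependent (MvPolynomial (Fin (m + 2)) K) (koszulSyzygies f j) := by
  refine Fintype.linearIndependent_iff.2 fun c hc l => ?_
  have h := congrFun hc (j.succAbove l)
  rw [Finset.sum_apply, Finset.sum_eq_single l] at h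
  · simpa [koszulSyzygies, hj] using h
  · intro l' _ hl'
    simp [koszulSyzygies, hl'.symm]
  · exact fun h => (h (Finset.mem_univ l)).elim

lemma exists_pderiv_ne_zero [CharZero K] {d : ℕ} (hf : f.IsHomogeneous (d + 1)) (hf0 : f ≠ 0) :
    ∃ j, pderiv j f ≠ 0 := by
  by_contra! h
  have heuler := hf.sum_X_mul_pderiv
  simp only [h, mul_zero, Finset.sum_const_zero] at heuler
  exact smul_ne_zero d.succ_ne_zero hf0 heuler.symm

/- A dependent family `ρ` would make every homogeneous syzygy a combination of `ρ`, although the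
syzygies have rank `m + 1`. -/
lemma TameFamily.linearIndependent [CharZero K] {d : ℕ} (h : TameFamily f ρ)
    (hf : f.IsHomogeneous (d + 1)) (hf0 : f ≠ 0) :
    LinearIndependent (MvPolynomial (Fin (m + 2)) K) ρ := by
  classical
  by_contra hρ
  obtain ⟨j, hj⟩ := exists_pderiv_ne_zero hf hf0
  have hspan : Set.range (koszulSyzygies f j) ⊆
      Submodule.span (MvPolynomial (Fin (m + 2)) K) (Set.range ρ) := by
    rintro _ ⟨l, rfl⟩
    refine h _ (koszulSyzygies_mem f j l) d (koszulSyzygies_mem_formVectors hf j l) fun hli => hρ ?_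
    simpa only [Function.comp_def, Fin.snoc_castSucc] using
      hli.comp Fin.castSucc (Fin.castSucc_injective m)
  have hcard := linearIndependent_le_span_aux' _ (linearIndependent_koszulSyzygies hj) _ hspan
  have := hcard.trans (Fintype.card_range_le ρ)
  simp only [Fintype.card_fin] at this
  omega

lemma TameFamily.span_eq [CharZero K] {d : ℕ} {e : Fin m → ℤ} (h : TameFamily f ρ)
    (hf : f.IsHomogeneous (d + 1)) (hf0 : f ≠ 0) (hρ : ∀ i, ρ i ∈ jacobianSyzygies f)
    (he : ∀ i, ρ i ∈ formVectors (Fin (m + 2)) (Fin (m + 2)) K (e i)) :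
    Submodule.span (MvPolynomial (Fin (m + 2)) K) (Set.range ρ) =
      jacobianSyzygies f ⊓ LinearMap.ker (eulerDet ρ) := by
  refine le_antisymm ?_ ?_
  · rw [Submodule.span_le]
    rintro _ ⟨i, rfl⟩
    exact ⟨hρ i, eulerDet_apply_self ρ i⟩
  · rintro τ ⟨hτ, hdet⟩
    refine mem_of_forall_formComponent_mem fun j => ?_
    have hτj := formComponent_mem_jacobianSyzygies hf hτ j
    refine h _ hτj j (formComponent_compLeft_mem τ j) ?_
    refine not_linearIndependent_of_det_eulerMatrix_eq_zero d.succ_ne_zero hf hf0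
      (snoc_mem hρ hτj) ?_
    have hdeg (i : Fin (m + 2)) : eulerDet ρ (Pi.single i 1) ∈
        forms (Fin (m + 2)) K (1 + (∑ i, e i + 0)) :=
      eulerDet_mem_forms he (single_mem_formVectors (isWeightedHomogeneous_one K _) i)
    have hj := formComponent_apply hdeg τ (j + (1 + (∑ i, e i + 0)))
    rw [LinearMap.mem_ker.1 hdet, map_zero, add_sub_cancel_right] at hj
    rw [← eulerDet_apply, hj]

end Tame

section Saito

variable {m : ℕ} {K : Type*} [Field K] {f : MvPolynomial (Fin (m + 2)) K}
  {ρ : Fin m → PolyVectorField (m + 2) K} {e : Fin (m + 1) → ℕ}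

/-- The hypersurface `f = 0` is free with exponents `e`: its Jacobian syzygies have a basis of
homogeneous elements of these degrees. -/
def IsFreeWithExponents (f : MvPolynomial (Fin (m + 2)) K) (e : Fin (m + 1) → ℕ) : Prop :=
  ∃ ρ : Fin (m + 1) → PolyVectorField (m + 2) K,
    (∀ i, ρ i ∈ formVectors (Fin (m + 2)) (Fin (m + 2)) K (e i)) ∧
    LinearIndependent (MvPolynomial (Fin (m + 2)) K) ρ ∧
    Submodule.span (MvPolynomial (Fin (m + 2)) K) (Set.range ρ) = jacobianSyzygies f

lemma IsFreeWithExponents.finrank_gradedPart (h : IsFreeWithExponents f e) (j : ℤ) :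
    Module.finrank K (gradedPart (jacobianSyzygies f) j) = ∑ i, formsDim m (j - e i) := by
  obtain ⟨ρ, hdeg, hli, hspan⟩ := h
  rw [← hspan, finrank_gradedPart_span hdeg hli]
  simp only [finrank_forms]

/- Saito's criterion: `eulerDet ρ σ` is a multiple `c f` for each syzygy `σ`, and then `σ - c τ` is
in the kernel of `eulerDet ρ`. -/
lemma isFreeWithExponents_of_eulerDet_eq [CharZero K] {d : ℕ} (hf : f.IsHomogeneous d)
    (hsq : Squarefree f) {τ : PolyVectorField (m + 2) K}
    (hspan : Submodule.span (MvPolynomial (Fin (m + 2)) K) (Set.range ρ) =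
      jacobianSyzygies f ⊓ LinearMap.ker (eulerDet ρ))
    (hρ : ∀ i, ρ i ∈ formVectors (Fin (m + 2)) (Fin (m + 2)) K (e i.castSucc))
    (hτ : τ ∈ jacobianSyzygies f)
    (hτdeg : τ ∈ formVectors (Fin (m + 2)) (Fin (m + 2)) K (e (Fin.last m)))
    (hdet : eulerDet ρ τ = f) : IsFreeWithExponents f e := by
  have hρmem (i : Fin m) : ρ i ∈ jacobianSyzygies f := by
    exact (hspan.le (Submodule.subset_span (Set.mem_range_self i))).1
  refine ⟨Fin.snoc ρ τ, fun i => ?_, ?_, le_antisymm ?_ fun σ hσ => ?_⟩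
  · cases i using Fin.lastCases with
    | last => simpa only [Fin.snoc_last] using hτdeg
    | cast i => simpa only [Fin.snoc_castSucc] using hρ i
  · rw [eulerDet_apply] at hdet
    have hrows := Matrix.linearIndependent_rows_of_det_ne_zero (hdet ▸ hsq.ne_zero)
    exact hrows.comp Fin.succ (Fin.succ_injective _)
  · rw [Submodule.span_le]
    rintro _ ⟨i, rfl⟩
    exact snoc_mem hρmem hτ i
  · obtain ⟨c, hc⟩ : f ∣ eulerDet ρ σ := by
      rw [eulerDet_apply]
      exact dvd_det_eulerMatrix hf hsq (snoc_mem hρmem hσ)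
    have hmem : σ - c • τ ∈ Submodule.span (MvPolynomial (Fin (m + 2)) K) (Set.range ρ) := by
      rw [hspan]
      refine ⟨Submodule.sub_mem _ hσ (Submodule.smul_mem _ _ hτ), LinearMap.mem_ker.2 ?_⟩
      rw [map_sub, map_smul, hdet, hc, smul_eq_mul, mul_comm, sub_self]
    rw [Fin.range_snoc, Submodule.mem_span_insert]
    exact ⟨c, _, hmem, by abel⟩

lemma finrank_map_mulRight_forms (hf0 : f ≠ 0) (j : ℤ) :
    Module.finrank K ((forms (Fin (m + 2)) K j).map (LinearMap.mulRight K f)) = formsDim m j := by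
  rw [finrank_map_of_injective, finrank_forms]
  exact fun a b => mul_right_cancel₀ hf0

section TameBound

variable [CharZero K] (hf : f.IsHomogeneous (∑ i, e i + 1)) (hsq : Squarefree f)
  (hρ : ∀ i, ρ i ∈ jacobianSyzygies f)
  (hdeg : ∀ i, ρ i ∈ formVectors (Fin (m + 2)) (Fin (m + 2)) K (e i.castSucc))
include hf hsq hρ hdeg

lemma map_eulerDet_gradedPart_le (q : ℤ) :
    (gradedPart (jacobianSyzygies f) q).map ((eulerDet ρ).restrictScalars K) ≤
      (forms (Fin (m + 2)) K (q - e (Fin.last m))).map (LinearMap.mulRight K f) := by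
  rintro _ ⟨τ, ⟨hτdeg, hτ⟩, rfl⟩
  obtain ⟨a, ha⟩ : f ∣ eulerDet ρ τ := by
    rw [eulerDet_apply]
    exact dvd_det_eulerMatrix hf hsq (snoc_mem hρ hτ)
  have hself := weightedHomogeneousComponent_eq_self (eulerDet_mem_forms hdeg hτdeg)
  have hcofactor : 1 + (∑ i : Fin m, (e i.castSucc : ℤ) + q) - ((∑ i, e i + 1 : ℕ) : ℤ) =
      q - e (Fin.last m) := by
    rw [Fin.sum_univ_castSucc]
    push_cast
    ring
  refine ⟨_, weightedHomogeneousComponent_mem _ a _, ?_⟩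
  rw [LinearMap.coe_restrictScalars, LinearMap.mulRight_apply, ← hcofactor,
    ← formComponent_mul (mem_forms_natCast.2 hf), mul_comm a, ← ha]
  exact hself

variable (htame : TameFamily f ρ)
include htame

lemma finrank_gradedPart_jacobianSyzygies (q : ℤ) :
    Module.finrank K (gradedPart (jacobianSyzygies f) q) =
      ∑ i : Fin m, formsDim m (q - e i.castSucc) + Module.finrank K
        ((gradedPart (jacobianSyzygies f) q).map ((eulerDet ρ).restrictScalars K)) := by
  have hker : gradedPart (jacobianSyzygies f) q ⊓ LinearMap.ker ((eulerDet ρ).restrictScalars K) =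
      gradedPart (Submodule.span (MvPolynomial (Fin (m + 2)) K) (Set.range ρ)) q := by
    rw [htame.span_eq hf hsq.ne_zero hρ hdeg]
    exact inf_assoc _ _ _
  rw [← finrank_map_add_finrank_inf_ker ((eulerDet ρ).restrictScalars K), hker,
    finrank_gradedPart_span hdeg (htame.linearIndependent hf hsq.ne_zero), add_comm]
  simp only [finrank_forms]

lemma finrank_gradedPart_le (q : ℤ) :
    Module.finrank K (gradedPart (jacobianSyzygies f) q) ≤ ∑ i, formsDim m (q - e i) := by
  rw [finrank_gradedPart_jacobianSyzygies hf hsq hρ hdeg htame, Fin.sum_univ_castSucc]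
  gcongr
  rw [← finrank_map_mulRight_forms hsq.ne_zero]
  exact Submodule.finrank_mono (map_eulerDet_gradedPart_le hf hsq hρ hdeg q)

lemma isFreeWithExponents_of_finrank_eq
    (h : Module.finrank K (gradedPart (jacobianSyzygies f) (e (Fin.last m))) =
      ∑ i, formsDim m (e (Fin.last m) - e i)) : IsFreeWithExponents f e := by
  rw [finrank_gradedPart_jacobianSyzygies hf hsq hρ hdeg htame, Fin.sum_univ_castSucc,
    add_right_inj, ← finrank_map_mulRight_forms hsq.ne_zero] at h
  have hmap := Submodule.eq_of_le_of_finrank_eq (map_eulerDet_gradedPart_le hf hsq hρ hdeg _) h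
  obtain ⟨τ, ⟨hτdeg, hτ⟩, hdet⟩ :
      f ∈ (gradedPart (jacobianSyzygies f) (e (Fin.last m))).map
        ((eulerDet ρ).restrictScalars K) := by
    rw [hmap, sub_self]
    exact ⟨1, isWeightedHomogeneous_one K _, one_mul f⟩
  exact isFreeWithExponents_of_eulerDet_eq hf hsq (htame.span_eq hf hsq.ne_zero hρ hdeg) hdeg hτ
    hτdeg hdet

end TameBound

end Saito

section Milnor

variable {m : ℕ} {K : Type*} [Field K] {f : MvPolynomial (Fin (m + 2)) K}
  {ρ : Fin m → PolyVectorField (m + 2) K} {e : Fin (m + 1) → ℕ}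

/-- The dimension of the degree `k` part of the Milnor algebra of `f`, the quotient of the
polynomial ring by the partial derivatives of `f`. -/
def milnorDim {n : ℕ} (f : MvPolynomial (Fin n) K) (k : ℕ) : ℕ :=
  Module.finrank K ((homogeneousSubmodule (Fin n) K k).map
    ((Ideal.span (Set.range fun i => pderiv i f)).restrictScalars K).mkQ)

/-- The value at `k` of the Hilbert function of the Milnor algebra of a free hypersurface in `ℙᵐ⁺¹`
with exponents `e`; its degree is `∑ i, e i + 1`. -/
def freeMilnorDim (e : Fin (m + 1) → ℕ) (k : ℕ) : ℤ :=
  formsDim m k - (m + 2) * formsDim m (k - ∑ i, e i) +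
    ∑ i, (formsDim m (k - ∑ i, e i - e i) : ℤ)

lemma milnorDim_eq_add_finrank {d k : ℕ} {q : ℤ} (hf : f.IsHomogeneous (d + 1))
    (hk : k = q + d) :
    (milnorDim f k : ℤ) = formsDim m k - (m + 2) * formsDim m q +
      Module.finrank K (gradedPart (jacobianSyzygies f) q) := by
  obtain rfl : q = k - d := by omega
  have h := finrank_forms_quotient (pderiv_mem_forms hf) (k : ℤ)
  rw [finrank_forms, finrank_forms, Fintype.card_fin, forms_natCast] at h
  have h' : (milnorDim f k : ℤ) + (m + 2) * formsDim m (k - d) = formsDim m k +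
      Module.finrank K (gradedPart (jacobianSyzygies f) (k - d)) := by
    exact_mod_cast h
  linarith

lemma IsFreeWithExponents.milnorDim_eq (h : IsFreeWithExponents f e)
    (hf : f.IsHomogeneous (∑ i, e i + 1)) (k : ℕ) : (milnorDim f k : ℤ) = freeMilnorDim e k := by
  rw [milnorDim_eq_add_finrank hf (sub_add_cancel _ _).symm, h.finrank_gradedPart, freeMilnorDim]
  push_cast
  rfl

section TameBound

variable [CharZero K] (hf : f.IsHomogeneous (∑ i, e i + 1)) (hsq : Squarefree f)
  (hρ : ∀ i, ρ i ∈ jacobianSyzygies f)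
  (hdeg : ∀ i, ρ i ∈ formVectors (Fin (m + 2)) (Fin (m + 2)) K (e i.castSucc))
  (htame : TameFamily f ρ)
include hf hsq hρ hdeg htame

lemma milnorDim_le_freeMilnorDim (k : ℕ) : (milnorDim f k : ℤ) ≤ freeMilnorDim e k := by
  have h := finrank_gradedPart_le hf hsq hρ hdeg htame (k - (∑ i, e i : ℕ))
  rw [milnorDim_eq_add_finrank hf (sub_add_cancel _ _).symm, freeMilnorDim]
  push_cast at h ⊢
  gcongr
  exact_mod_cast h

lemma milnorDim_eq_freeMilnorDim_iff :
    (milnorDim f (e (Fin.last m) + ∑ i, e i) : ℤ) = freeMilnorDim e (e (Fin.last m) + ∑ i, e i) ↔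
      IsFreeWithExponents f e := by
  refine ⟨fun h => ?_, fun h => h.milnorDim_eq hf _⟩
  refine isFreeWithExponents_of_finrank_eq hf hsq hρ hdeg htame ?_
  rw [milnorDim_eq_add_finrank hf (Nat.cast_add _ _), freeMilnorDim, Nat.cast_add, Nat.cast_sum,
    add_sub_cancel_right, add_right_inj] at h
  exact_mod_cast h

end TameBound

theorem thm_1_3_part2_general [CharZero K] (f : MvPolynomial (Fin (m + 2)) K)
    (e : Fin (m + 1) → ℕ) (ρ : Fin m → PolyVectorField (m + 2) K)
    (hf : f.IsHomogeneous (∑ i, e i + 1)) (hsq : Squarefree f)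
    (hρ : ∀ i, ρ i ∈ jacobianSyzygies f)
    (hdeg : ∀ i, ρ i ∈ formVectors (Fin (m + 2)) (Fin (m + 2)) K (e i.castSucc))
    (htame : TameFamily f ρ) :
    (∀ k : ℕ, (milnorDim f k : ℤ) ≤ freeMilnorDim e k) ∧
    List.TFAE [∀ k : ℕ, (milnorDim f k : ℤ) = freeMilnorDim e k,
      (milnorDim f (e (Fin.last m) + ∑ i, e i) : ℤ) =
        freeMilnorDim e (e (Fin.last m) + ∑ i, e i),
      IsFreeWithExponents f e] := by
  refine ⟨milnorDim_le_freeMilnorDim hf hsq hρ hdeg htame, ?_⟩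
  tfae_have 1 → 2 := fun h => h _
  tfae_have 2 ↔ 3 := milnorDim_eq_freeMilnorDim_iff hf hsq hρ hdeg htame
  tfae_have 3 → 1 := fun h => h.milnorDim_eq hf
  tfae_finish

end Milnor

section Surface

variable {f : S4} {ρ1 ρ2 : Fin 4 → S4} {e1 e2 e3 : ℕ}

lemma vecHomog_iff {ρ : Fin 4 → S4} {q : ℕ} :
    VecHomog ρ q ↔ ρ ∈ formVectors (Fin 4) (Fin 4) ℂ q := by
  simp only [VecHomog, Submodule.mem_pi, Set.mem_univ, forall_const, mem_forms_natCast]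

lemma sum_exponents (e1 e2 e3 : ℕ) : ∑ i : Fin (2 + 1), ![e1, e2, e3] i = e1 + e2 + e3 :=
  Fin.sum_univ_three _

lemma milnorBound3_eq (e1 e2 e3 k : ℕ) :
    milnorBound3 (e1 + e2 + e3 + 1) e1 e2 e3 k = freeMilnorDim ![e1, e2, e3] k := by
  have hbinom (j : ℤ) : formsDim 2 j = binom3 (j + 3) := rfl
  have hsum (g : Fin (2 + 1) → ℤ) : ∑ i, g i = g 0 + g 1 + g 2 := Fin.sum_univ_three g
  have hshift (a : ℤ) : k - ((e1 + e2 + e3 : ℕ) : ℤ) - a + 3 =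
      k - ((e1 + e2 + e3 + 1 : ℕ) : ℤ) - a + 4 := by
    push_cast
    ring
  have hshift0 := hshift 0
  rw [sub_zero, sub_zero] at hshift0
  simp only [milnorBound3, freeMilnorDim, sum_exponents, hsum, hbinom, Matrix.cons_val, hshift,
    hshift0]
  norm_num

lemma isFreeWith_iff :
    IsFreeWith f e1 e2 e3 ↔ e1 ≤ e2 ∧ e2 ≤ e3 ∧ IsFreeWithExponents f ![e1, e2, e3] := by
  have hcomb (a : Fin 3 → S4) (ρ : Fin 3 → PolyVectorField 4 ℂ) :
      ∑ i, a i • ρ i = a 0 • ρ 0 + a 1 • ρ 1 + a 2 • ρ 2 := Fin.sum_univ_three _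
  refine and_congr_right fun _ => and_congr_right fun _ => ?_
  constructor
  · rintro ⟨ρ1, ρ2, ρ3, h1, h2, h3, hdeg1, hdeg2, hdeg3, hspan, hli⟩
    refine ⟨![ρ1, ρ2, ρ3], fun i => ?_, ?_, le_antisymm ?_ fun ρ hρ => ?_⟩
    · fin_cases i
      exacts [vecHomog_iff.1 hdeg1, vecHomog_iff.1 hdeg2, vecHomog_iff.1 hdeg3]
    · refine Fintype.linearIndependent_iff.2 fun c hc i => ?_
      obtain ⟨hc0, hc1, hc2⟩ := hli (c 0) (c 1) (c 2) ((hcomb c ![ρ1, ρ2, ρ3]).symm.trans hc)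
      fin_cases i
      exacts [hc0, hc1, hc2]
    · rw [Submodule.span_le]
      rintro _ ⟨i, rfl⟩
      fin_cases i
      exacts [h1, h2, h3]
    · obtain ⟨a, b, c, rfl⟩ := hspan ρ hρ
      exact (Submodule.mem_span_range_iff_exists_fun _).2 ⟨![a, b, c], hcomb _ ![ρ1, ρ2, ρ3]⟩
  · rintro ⟨ρ, hdeg, hli, hspan⟩
    have hmem (i : Fin 3) : ρ i ∈ AR4 f := hspan.le (Submodule.subset_span (Set.mem_range_self i))
    refine ⟨ρ 0, ρ 1, ρ 2, hmem 0, hmem 1, hmem 2, vecHomog_iff.2 (hdeg 0),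
      vecHomog_iff.2 (hdeg 1), vecHomog_iff.2 (hdeg 2), fun σ hσ => ?_, fun a b c h => ?_⟩
    · obtain ⟨c, rfl⟩ := (Submodule.mem_span_range_iff_exists_fun _).1 (hspan.ge hσ)
      exact ⟨c 0, c 1, c 2, hcomb c ρ⟩
    · have hc := Fintype.linearIndependent_iff.1 hli ![a, b, c] ((hcomb _ ρ).trans h)
      exact ⟨hc 0, hc 1, hc 2⟩

lemma minorsVanish3_of_not_linearIndependent {ρ : Fin 4 → S4}
    (h : ¬LinearIndependent S4 ![ρ1, ρ2, ρ]) : MinorsVanish3 ρ1 ρ2 ρ := by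
  intro j
  by_contra hdet
  exact h ((Matrix.linearIndependent_rows_of_det_ne_zero hdet).of_comp
    (LinearMap.funLeft S4 S4 j.succAbove))

lemma TamePair.tameFamily (h : TamePair f ρ1 ρ2) : TameFamily f ![ρ1, ρ2] := by
  intro τ hτ j hj hdep
  rcases lt_or_ge j 0 with hneg | hnonneg
  · have hzero : τ = 0 := funext fun i => (forms_of_neg hneg).le (hj i trivial)
    exact hzero ▸ Submodule.zero_mem _
  · lift j to ℕ using hnonneg
    have hsnoc : Fin.snoc ![ρ1, ρ2] τ = ![ρ1, ρ2, τ] := by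
      ext i
      fin_cases i <;> rfl
    obtain ⟨a, b, rfl⟩ := h τ hτ j (vecHomog_iff.2 hj)
      (minorsVanish3_of_not_linearIndependent (hsnoc ▸ hdep))
    exact (Submodule.mem_span_range_iff_exists_fun _).2 ⟨![a, b], Fin.sum_univ_two _⟩

end Surface

/-- **Theorem 1.3 (2).** For a tame surface and `k ≥ e3 + d - 1`, `m(f)_k` is bounded above
by the stated binomial expression; equality for all such `k` is equivalent to equality at
`k = e3 + d - 1`, and both are equivalent to `D` being free with exponents `e1, e2, e3`. -/
theorem thm_1_3_part2 (f : S4) (d e1 e2 e3 : ℕ) (ρ1 ρ2 : Fin 4 → S4)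
    (hd : 1 ≤ d) (hf : f.IsHomogeneous d) (hred : Squarefree f)
    (hmin : MinimalPair f ρ1 ρ2 e1 e2) (htame : TamePair f ρ1 ρ2)
    (he3 : e1 + e2 + e3 + 1 = d) (he23 : e2 ≤ e3) :
    (∀ k : ℕ, e3 + d - 1 ≤ k → (milnor4 f k : ℤ) ≤ milnorBound3 d e1 e2 e3 k) ∧
    ((∀ k : ℕ, e3 + d - 1 ≤ k → (milnor4 f k : ℤ) = milnorBound3 d e1 e2 e3 k) ↔
      (milnor4 f (e3 + d - 1) : ℤ) = milnorBound3 d e1 e2 e3 (e3 + d - 1)) ∧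
    ((milnor4 f (e3 + d - 1) : ℤ) = milnorBound3 d e1 e2 e3 (e3 + d - 1) ↔
      IsFreeWith f e1 e2 e3) := by
  obtain rfl := he3
  obtain ⟨hρ1, -, hdeg1, -, hρ2, hdeg2, he12, -, -⟩ := hmin
  obtain ⟨hle, htfae⟩ := thm_1_3_part2_general f ![e1, e2, e3] ![ρ1, ρ2]
    (sum_exponents e1 e2 e3 ▸ hf) hred (Fin.forall_fin_two.2 ⟨hρ1, hρ2⟩)
    (Fin.forall_fin_two.2 ⟨vecHomog_iff.1 hdeg1, vecHomog_iff.1 hdeg2⟩) htame.tameFamily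
  simp only [← milnorBound3_eq, sum_exponents] at hle htfae
  have hfree : (milnor4 f (e3 + (e1 + e2 + e3)) : ℤ) =
      milnorBound3 (e1 + e2 + e3 + 1) e1 e2 e3 (e3 + (e1 + e2 + e3)) ↔ IsFreeWith f e1 e2 e3 :=
    (htfae.out 1 2).trans (by simp only [isFreeWith_iff, he12, he23, true_and])
  refine ⟨fun k _ => hle k, ⟨fun h => h _ le_rfl, fun h k _ => ?_⟩, hfree⟩
  exact (htfae.out 0 1 rfl rfl).2 h k
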